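/- For the sequence {x_n} generated by Algorithm 2, one has lim_{n→∞} ‖x_{n+1} − x_n‖/λ_n = 0 and lim_{n→∞} ‖x_{n+1} − x_n‖ = 0. -/

import Mathlib

open Filter Topology

/-!
Consecutive points of the iteration are compared stage by stage. Cocoercivity of the gradient
(Baillon–Haddad) makes the forward step `z ↦ z - λ ∇h z` nonexpansive. The resolvent identity
`prox_{l f} v = prox_{l' f} (y + (l' / l) (v - y))`, `y = prox_{l f} v`, reduces two proximal steps
with different parameters to nonexpansiveness of a single proximal map. Since all sequences involved
are bounded, inertia, momentum, and the variation of `λ` and `α` only contribute errors that are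
`o(α_{n+1} λ_{n+1})`, so that
`‖x_{n+2} - x_{n+1}‖ ≤ (1 - α_{n+1}) ‖x_{n+1} - x_n‖ + o(α_{n+1} λ_{n+1})`.
Dividing by `λ_{n+1}`, and using that `1 / λ` varies by `o(α_{n+1})`, gives a recurrence
`a_{n+1} ≤ (1 - α_{n+1}) a_n + o(α_{n+1})` for `a_n = ‖x_{n+1} - x_n‖ / λ_n`, and divergence of
`∑ α_n` forces `a_n → 0`.
-/

open Asymptotics

section Recurrences

theorem tendsto_zero_of_succ_le_one_sub_mul {a α : ℕ → ℝ} (ha : ∀ n, 0 ≤ a n)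
    (hα : ∀ n, 0 ≤ α n) (hα_sum : ¬ Summable α) (h : ∀ n, a (n + 1) ≤ (1 - α n) * a n) :
    Tendsto a atTop (𝓝 0) := by
  have le_exp (n : ℕ) : a n ≤ Real.exp (-∑ k ∈ Finset.range n, α k) * a 0 := by
    induction n with
    | zero => simp
    | succ n ih =>
      calc a (n + 1) ≤ (1 - α n) * a n := h n
        _ ≤ Real.exp (-α n) * (Real.exp (-∑ k ∈ Finset.range n, α k) * a 0) :=
          mul_le_mul (Real.one_sub_le_exp_neg _) ih (ha n) (Real.exp_pos _).le
        _ = Real.exp (-∑ k ∈ Finset.range (n + 1), α k) * a 0 := by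
          rw [← mul_assoc, ← Real.exp_add, Finset.sum_range_succ, neg_add_rev]
  have hsum := (not_summable_iff_tendsto_nat_atTop_of_nonneg hα).1 hα_sum
  refine squeeze_zero ha le_exp ?_
  simpa using (Real.tendsto_exp_neg_atTop_nhds_zero.comp hsum).mul_const (a 0)

theorem tendsto_zero_of_succ_le_one_sub_mul_add {a α r : ℕ → ℝ} (ha : ∀ n, 0 ≤ a n)
    (hα : ∀ n, 0 ≤ α n) (hα_le : ∀ n, α n ≤ 1) (hα_sum : ¬ Summable α) (hr : r =o[atTop] α)
    (h : ∀ᶠ n in atTop, a (n + 1) ≤ (1 - α n) * a n + r n) : Tendsto a atTop (𝓝 0) := by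
  refine tendsto_order.2 ⟨fun b hb => .of_forall fun n => hb.trans_le (ha n), fun ε hε => ?_⟩
  obtain ⟨N, hN⟩ := eventually_atTop.1 (h.and (hr.bound (half_pos hε)))
  have excess_succ_le (k : ℕ) :
      max (a (k + 1 + N) - ε / 2) 0 ≤ (1 - α (k + N)) * max (a (k + N) - ε / 2) 0 := by
    obtain ⟨hstep, hrem⟩ := hN (k + N) (Nat.le_add_left N k)
    rw [Real.norm_eq_abs, Real.norm_of_nonneg (hα _)] at hrem
    have hcontr : 0 ≤ 1 - α (k + N) := sub_nonneg.2 (hα_le _)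
    refine max_le ?_ (mul_nonneg hcontr (le_max_right _ _))
    rw [Nat.add_right_comm]
    calc a (k + N + 1) - ε / 2 ≤ (1 - α (k + N)) * (a (k + N) - ε / 2) := by
          linarith [le_abs_self (r (k + N))]
      _ ≤ _ := mul_le_mul_of_nonneg_left (le_max_left _ _) hcontr
  have excess_tendsto : Tendsto (fun k => max (a (k + N) - ε / 2) 0) atTop (𝓝 0) :=
    tendsto_zero_of_succ_le_one_sub_mul (fun _ => le_max_right _ _) (fun k => hα (k + N))
      (by rwa [summable_nat_add_iff]) excess_succ_le
  have excess_lt := (tendsto_add_atTop_iff_nat (f := fun n => max (a n - ε / 2) 0) N).1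
    excess_tendsto |>.eventually (gt_mem_nhds (half_pos hε))
  filter_upwards [excess_lt] with n hn
  linarith [le_max_left (a n - ε / 2) 0]

theorem isLittleO_of_succ_le_one_sub_mul_add {a α lam r : ℕ → ℝ} (ha : ∀ n, 0 ≤ a n)
    (ha_bdd : a =O[atTop] fun _ => (1 : ℝ)) (hlam : ∀ n, 0 < lam n)
    (hα : ∀ n, 0 ≤ α n) (hα_le : ∀ n, α n ≤ 1) (hα_sum : ¬ Summable α)
    (hlam_inv : (fun n => 1 / lam (n + 1) - 1 / lam n) =o[atTop] α)
    (hr : r =o[atTop] fun n => α n * lam (n + 1))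
    (h : ∀ᶠ n in atTop, a (n + 1) ≤ (1 - α n) * a n + r n) : a =o[atTop] lam := by
  have remainder_isLittleO : (fun n =>
      a n * |1 / lam (n + 1) - 1 / lam n| + r n / lam (n + 1)) =o[atTop] α := by
    refine .add (by simpa using ha_bdd.mul_isLittleO hlam_inv.abs_left) ?_
    refine (hr.mul_isBigO (isBigO_refl (fun n => (lam (n + 1))⁻¹) atTop)).congr_right fun n => ?_
    exact mul_inv_cancel_right₀ (hlam _).ne' _
  refine (isLittleO_iff_tendsto fun n hn => absurd hn (hlam n).ne').2 <|
    tendsto_zero_of_succ_le_one_sub_mul_add (fun n => div_nonneg (ha n) (hlam n).le) hα hα_le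
      hα_sum remainder_isLittleO ?_
  filter_upwards [h] with n hn
  have drift_le : (1 - α n) * (a n * (1 / lam (n + 1) - 1 / lam n)) ≤
      a n * |1 / lam (n + 1) - 1 / lam n| := by
    refine (mul_le_mul_of_nonneg_left (mul_le_mul_of_nonneg_left (le_abs_self _) (ha n))
      (sub_nonneg.2 (hα_le n))).trans ?_
    exact mul_le_of_le_one_left (mul_nonneg (ha n) (abs_nonneg _)) (sub_le_self 1 (hα n))
  calc a (n + 1) / lam (n + 1) ≤ ((1 - α n) * a n + r n) / lam (n + 1) :=
        div_le_div_of_nonneg_right hn (hlam _).le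
    _ = (1 - α n) * (a n / lam n) + (1 - α n) * (a n * (1 / lam (n + 1) - 1 / lam n))
        + r n / lam (n + 1) := by ring
    _ ≤ _ := by linarith

theorem isBoundedUnder_le_of_succ_le {a : ℕ → ℝ} {b C : ℝ} (hb₀ : 0 ≤ b) (hb₁ : b < 1)
    (h : ∀ᶠ n in atTop, a (n + 1) ≤ C + b * a n) : IsBoundedUnder (· ≤ ·) atTop a := by
  obtain ⟨N, hN⟩ := eventually_atTop.1 h
  have hfix : C / (1 - b) = C + b * (C / (1 - b)) := by
    field_simp [(sub_pos.2 hb₁).ne']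
    ring
  refine ⟨max (a N) (C / (1 - b)), eventually_map.2 <| eventually_atTop.2 ⟨N, fun n hn => ?_⟩⟩
  induction n, hn using Nat.le_induction with
  | base => exact le_max_left _ _
  | succ n hn ih =>
    have hmax := mul_le_mul_of_nonneg_left (le_max_right (a N) (C / (1 - b))) (sub_nonneg.2 hb₁.le)
    linarith [hN n hn, mul_le_mul_of_nonneg_left ih hb₀]

theorem isLittleO_succ_of_antitone {a δ : ℕ → ℝ} (ha : Antitone a) (ha₀ : ∀ n, 0 ≤ a n)
    (h : a =o[atTop] δ) : (fun n => a (n + 1)) =o[atTop] δ := by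
  refine IsBigO.trans_isLittleO (.of_norm_le fun n => ?_) h.norm_left
  rw [Real.norm_of_nonneg (ha₀ _), Real.norm_of_nonneg (ha₀ _)]
  exact ha n.le_succ

theorem isLittleO_of_tendsto_one_div_mul_abs {a b : ℕ → ℝ} (hb : ∀ n, b n ≠ 0)
    (h : Tendsto (fun n => 1 / b n * |a n|) atTop (𝓝 0)) : a =o[atTop] b :=
  isLittleO_abs_left.1 <| isLittleO_of_tendsto (fun n hn => absurd hn (hb n)) <|
    h.congr fun _ => one_div_mul_eq_div _ _

variable {E : Type*} [NormedAddCommGroup E]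

theorem isBigO_one_of_succ_eq_add_smul [NormedSpace ℝ E] {d g : ℕ → E} {c : ℕ → ℝ}
    (hg : g =O[atTop] fun _ => (1 : ℝ)) (hc : Tendsto c atTop (𝓝 0))
    (h : ∀ᶠ n in atTop, d (n + 1) = g n + c n • d n) : d =O[atTop] fun _ => (1 : ℝ) := by
  obtain ⟨C, hC⟩ := hg.bound
  have hc_half : ∀ᶠ n in atTop, ‖c n‖ ≤ 1 / 2 :=
    (tendsto_zero_iff_norm_tendsto_zero.1 hc).eventually (ge_mem_nhds one_half_pos)
  refine (isBigO_one_iff ℝ).2 <|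
    isBoundedUnder_le_of_succ_le (C := C) one_half_pos.le one_half_lt_one ?_
  filter_upwards [hC, hc_half, h] with n hCn hcn hn
  rw [hn]
  refine (norm_add_le _ _).trans (add_le_add (by simpa using hCn) ?_)
  exact (norm_smul_le _ _).trans (mul_le_mul_of_nonneg_right hcn (norm_nonneg _))

theorem isBigO_one_comp_of_lipschitzWith {ι F : Type*} [NormedAddCommGroup F] {K : NNReal}
    {g : E → F} (hg : LipschitzWith K g) {l : Filter ι} {v : ι → E}
    (hv : v =O[l] fun _ => (1 : ℝ)) : (fun n => g (v n)) =O[l] fun _ => (1 : ℝ) := by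
  have hsub : (fun n => g (v n) - g 0) =O[l] v :=
    .of_bound K (.of_forall fun n => by simpa using hg.norm_sub_le (v n) 0)
  simpa using (hsub.trans hv).add (isBigO_const_const (g 0) one_ne_zero l)

end Recurrences

section Convex

variable {E : Type*} [NormedAddCommGroup E] [NormedSpace ℝ E]

theorem add_apply_sub_le_of_convexOn {s : Set E} {f : E → ℝ} {f' : E →L[ℝ] ℝ} {x y : E}
    (hf : ConvexOn ℝ s f) (hx : x ∈ s) (hy : y ∈ s) (hf' : HasFDerivAt f f' x) :
    f x + f' (y - x) ≤ f y := by
  have hline : HasDerivAt (f ∘ AffineMap.lineMap x y) (f' (y - x)) (0 : ℝ) :=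
    HasFDerivAt.comp_hasDerivAt _ (by simpa using hf') AffineMap.hasDerivAt_lineMap
  have := (hf.comp_affineMap (AffineMap.lineMap x y)).le_slope_of_hasDerivAt
    (by simpa using hx) (by simpa using hy) zero_lt_one hline
  simp only [slope_def_field, Function.comp_apply, AffineMap.lineMap_apply_zero,
    AffineMap.lineMap_apply_one, sub_zero, div_one] at this
  linarith

theorem apply_add_le_of_lipschitz_fderiv {f : E → ℝ} {f' : E → E →L[ℝ] ℝ} {K : ℝ}
    (hf : ∀ x, HasFDerivAt f (f' x) x) (hf' : ∀ x y, ‖f' x - f' y‖ ≤ K * ‖x - y‖) (x v : E) :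
    f (x + v) ≤ f x + f' x v + K / 2 * ‖v‖ ^ 2 := by
  have hline (t : ℝ) : HasDerivAt (fun t : ℝ => f (x + t • v)) (f' (x + t • v) v) t :=
    (hf _).comp_hasDerivAt t <| by simpa using ((hasDerivAt_id t).smul_const v).const_add x
  have hparabola (t : ℝ) : HasDerivAt (fun t : ℝ => f x + t * f' x v + K / 2 * ‖v‖ ^ 2 * t ^ 2)
      (f' x v + K * t * ‖v‖ ^ 2) t := by
    refine ((((hasDerivAt_id' t).mul_const (f' x v)).const_add (f x)).fun_add
      ((hasDerivAt_pow 2 t).const_mul (K / 2 * ‖v‖ ^ 2))).congr_deriv ?_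
    ring
  have hslope {t : ℝ} (ht : 0 ≤ t) : f' (x + t • v) v ≤ f' x v + K * t * ‖v‖ ^ 2 := by
    have hlip := hf' (x + t • v) x
    rw [add_sub_cancel_left, norm_smul, Real.norm_of_nonneg ht] at hlip
    calc f' (x + t • v) v = f' x v + (f' (x + t • v) - f' x) v := by simp
      _ ≤ f' x v + K * (t * ‖v‖) * ‖v‖ := by
        gcongr
        exact (Real.le_norm_self _).trans (ContinuousLinearMap.le_of_opNorm_le _ hlip v)
      _ = f' x v + K * t * ‖v‖ ^ 2 := by ring
  have := image_le_of_deriv_right_le_deriv_boundary (a := 0) (b := 1)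
    (fun t _ => (hline t).continuousAt.continuousWithinAt)
    (fun t _ => (hline t).hasDerivWithinAt) (by simp)
    (fun t _ => (hparabola t).continuousAt.continuousWithinAt)
    (fun t _ => (hparabola t).hasDerivWithinAt) (fun t ht => hslope ht.1)
    (Set.right_mem_Icc.2 zero_le_one)
  simpa using this

end Convex

section Cocoercive

variable {H : Type*} [NormedAddCommGroup H] [InnerProductSpace ℝ H]

/-- An operator `G` on a real inner product space is `L`-cocoercive if `L • G` is firmly
nonexpansive. This covers both gradients of smooth convex functions and, for `L = 1`, firmly
nonexpansive operators. -/
def IsCocoercive (L : ℝ) (G : H → H) : Prop :=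
  ∀ x y, L * ‖G x - G y‖ ^ 2 ≤ inner ℝ (G x - G y) (x - y)

namespace IsCocoercive

variable {L : ℝ} {G : H → H}

theorem lipschitzWith (hG : IsCocoercive L G) (hL : 0 < L) :
    LipschitzWith (L⁻¹).toNNReal G := by
  refine .of_dist_le_mul fun x y => ?_
  rw [Real.coe_toNNReal _ (inv_nonneg.2 hL.le), dist_eq_norm, dist_eq_norm,
    le_inv_mul_iff₀ hL]
  rcases (norm_nonneg (G x - G y)).eq_or_lt with h0 | hpos
  · simp [← h0]
  · refine le_of_mul_le_mul_right ?_ hpos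
    linarith [hG x y, real_inner_le_norm (G x - G y) (x - y)]

theorem lipschitzWith_one (hG : IsCocoercive 1 G) : LipschitzWith 1 G := by
  simpa using hG.lipschitzWith one_pos

theorem norm_sub_sub_smul_le (hG : IsCocoercive L G) {t : ℝ} (ht : 0 ≤ t) (htL : t ≤ 2 * L)
    (x y : H) : ‖x - y - t • (G x - G y)‖ ≤ ‖x - y‖ := by
  refine le_of_sq_le_sq ?_ (norm_nonneg _)
  have hcross : t * (t * ‖G x - G y‖ ^ 2) ≤ 2 * (t * inner ℝ (G x - G y) (x - y)) := by
    calc t * (t * ‖G x - G y‖ ^ 2) ≤ t * (2 * L * ‖G x - G y‖ ^ 2) := by gcongr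
      _ = 2 * (t * (L * ‖G x - G y‖ ^ 2)) := by ring
      _ ≤ _ := by gcongr; exact hG x y
  rw [norm_sub_sq_real, inner_smul_right, norm_smul, Real.norm_of_nonneg ht, real_inner_comm]
  linarith

end IsCocoercive

theorem add_inner_add_norm_sq_le_of_convexOn [CompleteSpace H] {h : H → ℝ} {G : H → H} {L : ℝ}
    (hL : 0 < L) (hh : ConvexOn ℝ Set.univ h) (hG : ∀ x, HasGradientAt h (G x) x)
    (hG_lip : ∀ x y, ‖G x - G y‖ ≤ 1 / L * ‖x - y‖) (x y : H) :
    h x + inner ℝ (G x) (y - x) + L / 2 * ‖G y - G x‖ ^ 2 ≤ h y := by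
  set g := G y - G x with hg
  -- `-(L • g)` minimizes over `v` the upper bound for `h (y + v) - inner ℝ (G x) v` given by the
  -- descent lemma.
  have hlower : h x + inner ℝ (G x) (y + -(L • g) - x) ≤ h (y + -(L • g)) :=
    add_apply_sub_le_of_convexOn hh (Set.mem_univ _) (Set.mem_univ _) (hG x).hasFDerivAt
  have hupper : h (y + -(L • g)) ≤
      h y + inner ℝ (G y) (-(L • g)) + 1 / L / 2 * ‖-(L • g)‖ ^ 2 :=
    apply_add_le_of_lipschitz_fderiv (fun x => (hG x).hasFDerivAt)
      (fun x y => by rw [← map_sub, LinearIsometryEquiv.norm_map]; exact hG_lip x y) y _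
  have hinner : inner ℝ (G y) g = inner ℝ (G x) g + ‖g‖ ^ 2 := by
    rw [← real_inner_self_eq_norm_sq, ← inner_add_left, hg, add_sub_cancel]
  have hsq : 1 / L / 2 * ‖-(L • g)‖ ^ 2 = L / 2 * ‖g‖ ^ 2 := by
    rw [norm_neg, norm_smul, Real.norm_of_nonneg hL.le]
    field_simp
  rw [hsq, inner_neg_right, inner_smul_right, hinner] at hupper
  rw [add_sub_right_comm, inner_add_right, inner_neg_right, inner_smul_right] at hlower
  linarith

theorem isCocoercive_of_convexOn [CompleteSpace H] {h : H → ℝ} {G : H → H} {L : ℝ}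
    (hL : 0 < L) (hh : ConvexOn ℝ Set.univ h) (hG : ∀ x, HasGradientAt h (G x) x)
    (hG_lip : ∀ x y, ‖G x - G y‖ ≤ 1 / L * ‖x - y‖) : IsCocoercive L G := by
  intro x y
  have hxy := add_inner_add_norm_sq_le_of_convexOn hL hh hG hG_lip x y
  have hyx := add_inner_add_norm_sq_le_of_convexOn hL hh hG hG_lip y x
  rw [← neg_sub x y, inner_neg_right, norm_sub_rev] at hxy
  rw [inner_sub_left]
  linarith

end Cocoercive

section Prox

variable {H : Type*} [NormedAddCommGroup H] [InnerProductSpace ℝ H]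

/-- `IsProx f l v y` says that `y` is a proximal point `prox_{l f}(v)`, that is, a minimizer of
`u ↦ f u + ‖v - u‖ ^ 2 / (2 * l)`. -/
def IsProx (f : H → ℝ) (l : ℝ) (v y : H) : Prop :=
  ∀ u, f y + (1 / (2 * l)) * ‖v - y‖ ^ 2 ≤ f u + (1 / (2 * l)) * ‖v - u‖ ^ 2

variable {f : H → ℝ} {l l' : ℝ} {v v' y y' : H}

theorem isProx_iff_inner_le (hf : ConvexOn ℝ Set.univ f) (hl : 0 < l) :
    IsProx f l v y ↔ ∀ u, inner ℝ (v - y) (u - y) ≤ l * (f u - f y) := by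
  have norm_sq_sub (u : H) : ‖v - u‖ ^ 2 =
      ‖v - y‖ ^ 2 - 2 * inner ℝ (v - y) (u - y) + ‖u - y‖ ^ 2 := by
    rw [← norm_sub_sq_real, sub_sub_sub_cancel_right]
  have isProx_iff : IsProx f l v y ↔
      ∀ u, inner ℝ (v - y) (u - y) ≤ l * (f u - f y) + ‖u - y‖ ^ 2 / 2 := by
    refine forall_congr' fun u => ?_
    rw [norm_sq_sub u, ← mul_le_mul_iff_right₀ hl]
    field_simp
    constructor <;> intro h <;> linarith
  rw [isProx_iff]
  refine ⟨fun h u => ?_, fun h u => (h u).trans (le_add_of_nonneg_right (by positivity))⟩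
  have le_add_mul {t : ℝ} (ht₀ : 0 < t) (ht₁ : t ≤ 1) :
      inner ℝ (v - y) (u - y) ≤ l * (f u - f y) + t * (‖u - y‖ ^ 2 / 2) := by
    have hmin := h (y + t • (u - y))
    have hconv := hf.2 (Set.mem_univ y) (Set.mem_univ u) (sub_nonneg.2 ht₁) ht₀.le
      (sub_add_cancel 1 t)
    rw [show (1 - t) • y + t • u = y + t • (u - y) by module, smul_eq_mul, smul_eq_mul] at hconv
    rw [add_sub_cancel_left, inner_smul_right, norm_smul, Real.norm_of_nonneg ht₀.le] at hmin
    refine le_of_mul_le_mul_left ?_ ht₀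
    linarith [mul_le_mul_of_nonneg_left hconv hl.le]
  have hlim : Tendsto (fun t : ℝ => l * (f u - f y) + t * (‖u - y‖ ^ 2 / 2)) (𝓝[>] 0)
      (𝓝 (l * (f u - f y))) :=
    tendsto_nhdsWithin_of_tendsto_nhds (Continuous.tendsto' (by fun_prop) _ _ (by simp))
  exact ge_of_tendsto hlim <| mem_of_superset (Ioc_mem_nhdsGT one_pos)
    fun t ht => le_add_mul ht.1 ht.2

namespace IsProx

theorem norm_sub_le (hf : ConvexOn ℝ Set.univ f) (hl : 0 < l) (hy : IsProx f l v y)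
    (hy' : IsProx f l v' y') : ‖y' - y‖ ≤ ‖v' - v‖ := by
  have h := (isProx_iff_inner_le hf hl).1 hy y'
  have h' := (isProx_iff_inner_le hf hl).1 hy' y
  have hfirm : ‖y' - y‖ ^ 2 ≤ inner ℝ (v' - v) (y' - y) := by
    rw [← neg_sub y' y, inner_neg_right] at h'
    rw [show v' - v = (v' - y') - (v - y) + (y' - y) by abel, inner_add_left, inner_sub_left,
      real_inner_self_eq_norm_sq]
    linarith
  rcases (norm_nonneg (y' - y)).eq_or_lt with h0 | hpos
  · exact h0 ▸ norm_nonneg _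
  · refine le_of_mul_le_mul_right ?_ hpos
    linarith [real_inner_le_norm (v' - v) (y' - y)]

theorem rescale (hf : ConvexOn ℝ Set.univ f) (hl : 0 < l) (hl' : 0 < l') (hy : IsProx f l v y) :
    IsProx f l' (y + (l' / l) • (v - y)) y := by
  refine (isProx_iff_inner_le hf hl').2 fun u => ?_
  rw [add_sub_cancel_left, real_inner_smul_left]
  calc l' / l * inner ℝ (v - y) (u - y) ≤ l' / l * (l * (f u - f y)) := by
        gcongr
        exact (isProx_iff_inner_le hf hl).1 hy u
    _ = l' * (f u - f y) := by field_simp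

theorem norm_sub_le_of_isCocoercive {G : H → H} {L : ℝ} {z z' p p' : H}
    (hf : ConvexOn ℝ Set.univ f) (hG : IsCocoercive L G) (hl : 0 < l) (hl' : 0 < l')
    (hl'L : l' ≤ 2 * L) (hy : IsProx f l (z + l • (-G z + p)) y)
    (hy' : IsProx f l' (z' + l' • (-G z' + p')) y') :
    ‖y' - y‖ ≤ ‖z' - z‖ + l' * ‖p' - p‖ + |1 - l' / l| * ‖z - y‖ := by
  have hsplit : z' + l' • (-G z' + p') - (y + (l' / l) • (z + l • (-G z + p) - y)) =
      (z' - z - l' • (G z' - G z)) + l' • (p' - p) + (1 - l' / l) • (z - y) := by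
    match_scalars <;> field_simp <;> ring
  calc ‖y' - y‖ ≤ _ := (hy.rescale hf hl hl').norm_sub_le hf hl' hy'
    _ ≤ ‖z' - z - l' • (G z' - G z)‖ + ‖l' • (p' - p)‖ + ‖(1 - l' / l) • (z - y)‖ := by
      rw [hsplit]
      exact norm_add₃_le
    _ ≤ ‖z' - z‖ + l' * ‖p' - p‖ + |1 - l' / l| * ‖z - y‖ := by
      rw [norm_smul, norm_smul, Real.norm_of_nonneg hl'.le, Real.norm_eq_abs]
      gcongr
      exact hG.norm_sub_sub_smul_le hl'.le hl'L z' z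

end IsProx

end Prox

section Iteration

/-- Algorithm 2 with arbitrary weights `ω i`: inertial extrapolation, directions `d` of conjugate
gradient type, proximal steps, anchoring at `u i`, averaging. The directions are indexed as in the
paper, so that step `n` produces `d (n + 1)`. -/
structure IsInertialProximalIteration {ι H : Type*} [NormedAddCommGroup H] [InnerProductSpace ℝ H]
    (s : Finset ι) (ω : ι → ℝ) (f : ι → H → ℝ) (G T : ι → H → H) (u : ι → H)
    (θ lam β α : ℕ → ℝ) (x z : ℕ → H) (d y w : ℕ → ι → H) : Prop where
  extrapolation : ∀ n ≥ 1, z n = x n + θ n • (x n - x (n - 1))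
  direction : ∀ n ≥ 1, ∀ i ∈ s, d (n + 1) i = -G i (z n) + β n • d n i
  isProx : ∀ n ≥ 1, ∀ i ∈ s, IsProx (f i) (lam n) (z n + lam n • d (n + 1) i) (y n i)
  anchoring : ∀ n ≥ 1, ∀ i ∈ s, w n i = α n • u i + (1 - α n) • T i (y n i)
  averaging : ∀ n ≥ 1, x (n + 1) = ∑ i ∈ s, ω i • w n i

namespace IsInertialProximalIteration

variable {ι H : Type*} [NormedAddCommGroup H] [InnerProductSpace ℝ H]
  {s : Finset ι} {ω : ι → ℝ} {f : ι → H → ℝ} {G T : ι → H → H} {u : ι → H}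
  {θ lam β α : ℕ → ℝ} {x z : ℕ → H} {d y w : ℕ → ι → H} {i : ι}

theorem isBigO_one_iterate (h : IsInertialProximalIteration s ω f G T u θ lam β α x z d y w)
    (hα : α =O[atTop] fun _ => (1 : ℝ))
    (hTy : ∀ i ∈ s, (fun n => T i (y n i)) =O[atTop] fun _ => (1 : ℝ)) :
    x =O[atTop] fun _ => (1 : ℝ) := by
  have hw (i) (hi : i ∈ s) : (fun n => w n i) =O[atTop] fun _ => (1 : ℝ) := by
    have hanchor : (fun n => α n • u i) =O[atTop] fun _ => (1 : ℝ) := by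
      simpa using hα.smul (isBigO_const_const (u i) (one_ne_zero (α := ℝ)) atTop)
    have himage : (fun n => (1 - α n) • T i (y n i)) =O[atTop] fun _ => (1 : ℝ) := by
      simpa using ((isBigO_refl _ _).sub hα).smul (hTy i hi)
    refine (hanchor.add himage).congr' ?_ .rfl
    filter_upwards [eventually_ge_atTop 1] with n hn using (h.anchoring n hn i hi).symm
  have hsucc : (fun n => x (n + 1)) =O[atTop] fun _ => (1 : ℝ) := by
    refine (IsBigO.fun_sum fun i hi => (hw i hi).const_smul_left (ω i)).congr' ?_ .rfl
    filter_upwards [eventually_ge_atTop 1] with n hn using (h.averaging n hn).symm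
  rwa [← map_add_atTop_eq_nat 1, isBigO_map]

theorem isBigO_one_extrapolation
    (h : IsInertialProximalIteration s ω f G T u θ lam β α x z d y w)
    (hθ : θ =O[atTop] fun _ => (1 : ℝ)) (hx : x =O[atTop] fun _ => (1 : ℝ)) :
    z =O[atTop] fun _ => (1 : ℝ) := by
  have hinertia : (fun n => θ n • (x n - x (n - 1))) =O[atTop] fun _ => (1 : ℝ) := by
    simpa using hθ.smul (hx.sub (hx.comp_tendsto (tendsto_sub_atTop_nat 1)))
  refine (hx.add hinertia).congr' ?_ .rfl
  filter_upwards [eventually_ge_atTop 1] with n hn using (h.extrapolation n hn).symm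

theorem isBigO_one_direction (h : IsInertialProximalIteration s ω f G T u θ lam β α x z d y w)
    (hi : i ∈ s) (hβ : Tendsto β atTop (𝓝 0))
    (hGz : (fun n => G i (z n)) =O[atTop] fun _ => (1 : ℝ)) :
    (fun n => d n i) =O[atTop] fun _ => (1 : ℝ) :=
  isBigO_one_of_succ_eq_add_smul hGz.neg_left hβ <|
    (eventually_ge_atTop 1).mono fun n hn => h.direction n hn i hi

theorem exists_norm_extrapolation_sub_le
    (h : IsInertialProximalIteration s ω f G T u θ lam β α x z d y w) {δ : ℕ → ℝ}
    (hx : x =O[atTop] fun _ => (1 : ℝ)) (hθ : θ =o[atTop] δ)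
    (hθ_succ : (fun n => θ (n + 1)) =o[atTop] δ) :
    ∃ e : ℕ → ℝ, e =o[atTop] δ ∧
      ∀ n ≥ 1, ‖z (n + 1) - z n‖ ≤ ‖x (n + 1) - x n‖ + e n := by
  have hx_succ : (fun n => x (n + 1)) =O[atTop] fun _ => (1 : ℝ) :=
    hx.comp_tendsto (tendsto_add_atTop_nat 1)
  have hx_pred : (fun n => x (n - 1)) =O[atTop] fun _ => (1 : ℝ) :=
    hx.comp_tendsto (tendsto_sub_atTop_nat 1)
  refine ⟨fun n => ‖θ (n + 1) • (x (n + 1) - x n)‖ + ‖θ n • (x n - x (n - 1))‖,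
    .add (.norm_left ?_) (.norm_left ?_), fun n hn => ?_⟩
  · simpa using hθ_succ.smul_isBigO (hx_succ.sub hx)
  · simpa using hθ.smul_isBigO (hx.sub hx_pred)
  · rw [h.extrapolation n hn, h.extrapolation (n + 1) (Nat.le_add_left 1 n), Nat.add_sub_cancel,
      add_sub_add_comm]
    exact norm_add_le_of_le le_rfl (norm_sub_le _ _)

theorem exists_norm_prox_sub_le
    (h : IsInertialProximalIteration s ω f G T u θ lam β α x z d y w) {L : ℝ} {γ : ℕ → ℝ}
    (hi : i ∈ s) (hf : ConvexOn ℝ Set.univ (f i)) (hG : IsCocoercive L (G i))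
    (hlam : ∀ n, 0 < lam n) (hlam_le : ∀ n, lam n ≤ 2 * L)
    (hz : z =O[atTop] fun _ => (1 : ℝ)) (hd : (fun n => d n i) =O[atTop] fun _ => (1 : ℝ))
    (hy : (fun n => y n i) =O[atTop] fun _ => (1 : ℝ))
    (hβ : β =o[atTop] γ) (hβ_succ : (fun n => β (n + 1)) =o[atTop] γ)
    (hlam_inv : (fun n => 1 / lam (n + 1) - 1 / lam n) =o[atTop] γ) :
    ∃ e : ℕ → ℝ, (e =o[atTop] fun n => γ n * lam (n + 1)) ∧
      ∀ n ≥ 1, ‖y (n + 1) i - y n i‖ ≤ ‖z (n + 1) - z n‖ + e n := by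
  have hd_succ : (fun n => d (n + 1) i) =O[atTop] fun _ => (1 : ℝ) :=
    hd.comp_tendsto (tendsto_add_atTop_nat 1)
  have hmomentum : (fun n => ‖β (n + 1) • d (n + 1) i - β n • d n i‖) =o[atTop] γ :=
    .norm_left <| .sub (by simpa using hβ_succ.smul_isBigO hd_succ)
      (by simpa using hβ.smul_isBigO hd)
  have hratio : (fun n => |1 - lam (n + 1) / lam n|) =o[atTop] fun n => γ n * lam (n + 1) := by
    refine (hlam_inv.mul_isBigO (isBigO_refl (fun n => lam (n + 1)) atTop)).congr_left
      (fun n => ?_) |>.abs_left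
    rw [sub_mul, one_div_mul_cancel (hlam _).ne', one_div_mul_eq_div]
  refine ⟨fun n => lam (n + 1) * ‖β (n + 1) • d (n + 1) i - β n • d n i‖ +
    |1 - lam (n + 1) / lam n| * ‖z n - y n i‖, .add ?_ ?_, fun n hn => ?_⟩
  · simpa only [mul_comm] using (isBigO_refl (fun n => lam (n + 1)) atTop).mul_isLittleO hmomentum
  · simpa using hratio.mul_isBigO (hz.sub hy).norm_left
  · have hprox (n) (hn : n ≥ 1) :
        IsProx (f i) (lam n) (z n + lam n • (-G i (z n) + β n • d n i)) (y n i) :=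
      h.direction n hn i hi ▸ h.isProx n hn i hi
    rw [← add_assoc]
    exact (hprox n hn).norm_sub_le_of_isCocoercive hf hG (hlam n) (hlam _) (hlam_le _)
      (hprox (n + 1) (Nat.le_add_left 1 n))

theorem exists_norm_anchoring_sub_le
    (h : IsInertialProximalIteration s ω f G T u θ lam β α x z d y w) {δ : ℕ → ℝ}
    (hi : i ∈ s) (hT : LipschitzWith 1 (T i)) (hα_le : ∀ n, α n ≤ 1)
    (hTy : (fun n => T i (y n i)) =O[atTop] fun _ => (1 : ℝ))
    (hα_sub : (fun n => α (n + 1) - α n) =o[atTop] δ) :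
    ∃ e : ℕ → ℝ, e =o[atTop] δ ∧
      ∀ n ≥ 1, ‖w (n + 1) i - w n i‖ ≤ (1 - α (n + 1)) * ‖y (n + 1) i - y n i‖ + e n := by
  refine ⟨fun n => ‖(α (n + 1) - α n) • (u i - T i (y n i))‖, .norm_left ?_, fun n hn => ?_⟩
  · simpa using hα_sub.smul_isBigO
      ((isBigO_const_const (u i) (one_ne_zero (α := ℝ)) atTop).sub hTy)
  · have hsplit : w (n + 1) i - w n i = (1 - α (n + 1)) • (T i (y (n + 1) i) - T i (y n i)) +
        (α (n + 1) - α n) • (u i - T i (y n i)) := by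
      rw [h.anchoring n hn i hi, h.anchoring (n + 1) (Nat.le_add_left 1 n) i hi]
      module
    rw [hsplit]
    refine norm_add_le_of_le ?_ le_rfl
    have hcontr : 0 ≤ 1 - α (n + 1) := sub_nonneg.2 (hα_le _)
    rw [norm_smul, Real.norm_of_nonneg hcontr]
    gcongr
    simpa using hT.norm_sub_le (y (n + 1) i) (y n i)

theorem exists_norm_averaging_sub_le
    (h : IsInertialProximalIteration s ω f G T u θ lam β α x z d y w) {b δ : ℕ → ℝ}
    (hω : ∀ i ∈ s, 0 ≤ ω i) (hω_sum : ∑ i ∈ s, ω i = 1)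
    (hw : ∀ i ∈ s, ∃ e : ℕ → ℝ, e =o[atTop] δ ∧ ∀ n ≥ 1, ‖w (n + 1) i - w n i‖ ≤ b n + e n) :
    ∃ e : ℕ → ℝ, e =o[atTop] δ ∧ ∀ n ≥ 1, ‖x (n + 1 + 1) - x (n + 1)‖ ≤ b n + e n := by
  choose! e he hle using hw
  refine ⟨fun n => ∑ i ∈ s, ω i * e i n, .fun_sum fun i hi => (he i hi).const_mul_left (ω i),
    fun n hn => ?_⟩
  rw [h.averaging n hn, h.averaging (n + 1) (Nat.le_add_left 1 n), ← Finset.sum_sub_distrib]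
  calc ‖∑ i ∈ s, (ω i • w (n + 1) i - ω i • w n i)‖ ≤ ∑ i ∈ s, ω i * (b n + e i n) := by
        refine norm_sum_le_of_le _ fun i hi => ?_
        rw [← smul_sub, norm_smul, Real.norm_of_nonneg (hω i hi)]
        exact mul_le_mul_of_nonneg_left (hle i hi n hn) (hω i hi)
    _ = b n + ∑ i ∈ s, ω i * e i n := by
        simp_rw [mul_add, Finset.sum_add_distrib, ← Finset.sum_mul, hω_sum, one_mul]

theorem isLittleO_norm_sub (h : IsInertialProximalIteration s ω f G T u θ lam β α x z d y w)
    {L : ι → ℝ} (hω : ∀ i ∈ s, 0 ≤ ω i) (hω_sum : ∑ i ∈ s, ω i = 1)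
    (hf : ∀ i ∈ s, ConvexOn ℝ Set.univ (f i)) (hL : ∀ i ∈ s, 0 < L i)
    (hG : ∀ i ∈ s, IsCocoercive (L i) (G i)) (hT : ∀ i ∈ s, LipschitzWith 1 (T i))
    (hlam : ∀ n, 0 < lam n) (hlam_le : ∀ n, ∀ i ∈ s, lam n ≤ 2 * L i)
    (hα : ∀ n, 0 ≤ α n) (hα_le : ∀ n, α n ≤ 1) (hα_sum : ¬ Summable α)
    (hθ_bdd : θ =O[atTop] fun _ => (1 : ℝ))
    (hθ : θ =o[atTop] fun n => α (n + 1) * lam (n + 1))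
    (hθ_succ : (fun n => θ (n + 1)) =o[atTop] fun n => α (n + 1) * lam (n + 1))
    (hβ : β =o[atTop] fun n => α (n + 1))
    (hβ_succ : (fun n => β (n + 1)) =o[atTop] fun n => α (n + 1))
    (hα_sub : (fun n => α (n + 1) - α n) =o[atTop] fun n => α (n + 1) * lam (n + 1))
    (hlam_inv : (fun n => 1 / lam (n + 1) - 1 / lam n) =o[atTop] fun n => α (n + 1))
    (hy : ∀ i ∈ s, (fun n => y n i) =O[atTop] fun _ => (1 : ℝ)) :
    (fun n => ‖x (n + 1) - x n‖) =o[atTop] lam := by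
  have hα_bdd : α =O[atTop] fun _ => (1 : ℝ) :=
    .of_norm_le fun n => (Real.norm_of_nonneg (hα n)).trans_le (hα_le n)
  have hα_succ : (fun n => α (n + 1)) =O[atTop] fun _ => (1 : ℝ) :=
    hα_bdd.comp_tendsto (tendsto_add_atTop_nat 1)
  have hTy (i) (hi : i ∈ s) := isBigO_one_comp_of_lipschitzWith (hT i hi) (hy i hi)
  have hx := h.isBigO_one_iterate hα_bdd hTy
  have hz := h.isBigO_one_extrapolation hθ_bdd hx
  have hβ_lim : Tendsto β atTop (𝓝 0) := (isLittleO_one_iff ℝ).1 (hβ.trans_isBigO hα_succ)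
  obtain ⟨e₁, he₁, hz_sub⟩ := h.exists_norm_extrapolation_sub_le hx hθ hθ_succ
  have hw_sub (i) (hi : i ∈ s) : ∃ e : ℕ → ℝ, (e =o[atTop] fun n => α (n + 1) * lam (n + 1)) ∧
      ∀ n ≥ 1, ‖w (n + 1) i - w n i‖ ≤ (1 - α (n + 1)) * ‖x (n + 1) - x n‖ + e n := by
    have hd := h.isBigO_one_direction hi hβ_lim
      (isBigO_one_comp_of_lipschitzWith ((hG i hi).lipschitzWith (hL i hi)) hz)
    obtain ⟨e₂, he₂, hy_sub⟩ := h.exists_norm_prox_sub_le hi (hf i hi) (hG i hi) hlam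
      (fun n => hlam_le n i hi) hz hd (hy i hi) hβ hβ_succ hlam_inv
    obtain ⟨e₃, he₃, hw_sub⟩ :=
      h.exists_norm_anchoring_sub_le hi (hT i hi) hα_le (hTy i hi) hα_sub
    refine ⟨fun n => (1 - α (n + 1)) * (e₁ n + e₂ n) + e₃ n, .add ?_ he₃, fun n hn => ?_⟩
    · simpa using ((isBigO_refl _ _).sub hα_succ).mul_isLittleO (he₁.add he₂)
    · have := mul_le_mul_of_nonneg_left ((hy_sub n hn).trans (add_le_add_left (hz_sub n hn) _))
        (sub_nonneg.2 (hα_le (n + 1)))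
      linarith [hw_sub n hn]
  obtain ⟨e, he, hx_sub⟩ := h.exists_norm_averaging_sub_le hω hω_sum hw_sub
  have hx_sub_bdd : (fun n => ‖x (n + 1) - x n‖) =O[atTop] fun _ => (1 : ℝ) :=
    ((hx.comp_tendsto (tendsto_add_atTop_nat 1)).sub hx).norm_left
  exact isLittleO_of_succ_le_one_sub_mul_add (fun _ => norm_nonneg _) hx_sub_bdd hlam
    (fun n => hα (n + 1)) (fun n => hα_le (n + 1)) (by rwa [summable_nat_add_iff]) hlam_inv he
    ((eventually_ge_atTop 1).mono hx_sub)

end IsInertialProximalIteration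

end Iteration

theorem alg2_successive_differences_tendsto_zero_general
    {ι H : Type*} [NormedAddCommGroup H] [InnerProductSpace ℝ H]
    {s : Finset ι} {ω : ι → ℝ} {f : ι → H → ℝ} {G T : ι → H → H} {L : ι → ℝ} {u : ι → H}
    {θ lam β α : ℕ → ℝ} {x z : ℕ → H} {d y w : ℕ → ι → H}
    (h : IsInertialProximalIteration s ω f G T u θ lam β α x z d y w)
    (hω : ∀ i ∈ s, 0 ≤ ω i) (hω_sum : ∑ i ∈ s, ω i = 1)
    (hf : ∀ i ∈ s, ConvexOn ℝ Set.univ (f i)) (hL : ∀ i ∈ s, 0 < L i)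
    (hG : ∀ i ∈ s, IsCocoercive (L i) (G i)) (hT : ∀ i ∈ s, LipschitzWith 1 (T i))
    (hθ₀ : ∀ n, 0 ≤ θ n) (hlam : ∀ n, 0 < lam n) (hlam_le : ∀ n, ∀ i ∈ s, lam n ≤ 2 * L i)
    (hβ₀ : ∀ n, 0 ≤ β n) (hα : ∀ n, 0 < α n ∧ α n ≤ 1) (hθ : Antitone θ) (hβ : Antitone β)
    (hC1 : ¬ Summable α)
    (hC2 : Tendsto (fun n => (1 / α (n + 1)) * |1 / lam (n + 1) - 1 / lam n|) atTop (𝓝 0))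
    (hC3 : Tendsto (fun n => (1 / lam (n + 1)) * |1 - α n / α (n + 1)|) atTop (𝓝 0))
    (hC5 : Tendsto (fun n => θ n / (α (n + 1) * lam (n + 1))) atTop (𝓝 0))
    (hC7 : Tendsto (fun n => β n / α (n + 1)) atTop (𝓝 0))
    (hy : ∀ i ∈ s, ∃ C, ∀ n ≥ 1, ‖y n i‖ ≤ C) :
    Tendsto (fun n => ‖x (n + 1) - x n‖ / lam n) atTop (𝓝 0) ∧
      Tendsto (fun n => ‖x (n + 1) - x n‖) atTop (𝓝 0) := by
  have hα_ne (n : ℕ) : α (n + 1) ≠ 0 := (hα _).1.ne'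
  have hlam_ne (n : ℕ) : lam (n + 1) ≠ 0 := (hlam _).ne'
  have hθ_bdd : θ =O[atTop] fun _ => (1 : ℝ) := .of_bound (θ 0) <| .of_forall fun n => by
    simpa [abs_of_nonneg (hθ₀ n)] using hθ n.zero_le
  have hθ_littleO : θ =o[atTop] fun n => α (n + 1) * lam (n + 1) :=
    isLittleO_of_tendsto (fun n hn => absurd hn (mul_ne_zero (hα_ne n) (hlam_ne n))) hC5
  have hβ_littleO : β =o[atTop] fun n => α (n + 1) :=
    isLittleO_of_tendsto (fun n hn => absurd hn (hα_ne n)) hC7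
  have hα_sub : (fun n => α (n + 1) - α n) =o[atTop] fun n => α (n + 1) * lam (n + 1) :=
    ((isBigO_refl (fun n => α (n + 1)) atTop).mul_isLittleO
      (isLittleO_of_tendsto_one_div_mul_abs hlam_ne hC3)).congr_left
      fun n => by rw [mul_sub, mul_one, mul_div_cancel₀ _ (hα_ne n)]
  have hmain := h.isLittleO_norm_sub hω hω_sum hf hL hG hT hlam hlam_le (fun n => (hα n).1.le)
    (fun n => (hα n).2) hC1 hθ_bdd hθ_littleO (isLittleO_succ_of_antitone hθ hθ₀ hθ_littleO)
    hβ_littleO (isLittleO_succ_of_antitone hβ hβ₀ hβ_littleO) hα_sub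
    (isLittleO_of_tendsto_one_div_mul_abs hα_ne hC2) fun i hi => by
      obtain ⟨C, hC⟩ := hy i hi
      exact .of_bound C <| (eventually_ge_atTop 1).mono fun n hn => by simpa using hC n hn
  obtain ⟨i, hi⟩ : s.Nonempty := Finset.nonempty_of_sum_ne_zero (hω_sum ▸ one_ne_zero)
  have hlam_bdd : lam =O[atTop] fun _ => (1 : ℝ) := .of_bound (2 * L i) <| .of_forall fun n => by
    simpa [abs_of_pos (hlam n)] using hlam_le n i hi
  exact ⟨hmain.tendsto_div_nhds_zero, (isLittleO_one_iff ℝ).1 (hmain.trans_isBigO hlam_bdd)⟩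

theorem alg2_successive_differences_tendsto_zero
    {H : Type*} [NormedAddCommGroup H] [InnerProductSpace ℝ H] [CompleteSpace H]
    (M : ℕ) (hM : 1 ≤ M)
    (f h : ℕ → H → ℝ) (h' : ℕ → H → H) (L : ℕ → ℝ) (T : ℕ → H → H)
    (hf_cont : ∀ i ∈ Finset.Icc 1 M, Continuous (f i))
    (hf_conv : ∀ i ∈ Finset.Icc 1 M, ConvexOn ℝ Set.univ (f i))
    (hh_conv : ∀ i ∈ Finset.Icc 1 M, ConvexOn ℝ Set.univ (h i))
    (hh_grad : ∀ i ∈ Finset.Icc 1 M, ∀ x : H, HasGradientAt (h i) (h' i x) x)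
    (hL_pos : ∀ i ∈ Finset.Icc 1 M, 0 < L i)
    (hh_lip : ∀ i ∈ Finset.Icc 1 M, ∀ x y : H, ‖h' i x - h' i y‖ ≤ (1 / L i) * ‖x - y‖)
    (hT_firm : ∀ i ∈ Finset.Icc 1 M, ∀ x y : H,
      ‖T i x - T i y‖ ^ 2 ≤ @inner ℝ H _ (T i x - T i y) (x - y))
    (S : Set H) (hS : S = ⋂ i ∈ Finset.Icc 1 M, {x : H | T i x = x}) (hS_ne : S.Nonempty)
    (θ lam β α : ℕ → ℝ) (σ : ℝ) (hσ : 1 ≤ σ)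
    (hθ_range : ∀ n, 0 ≤ θ n ∧ θ n < 1)
    (hlam_pos : ∀ n, 0 < lam n)
    (hlam_le : ∀ n, ∀ i ∈ Finset.Icc 1 M, lam n ≤ 2 * L i)
    (hβ_range : ∀ n, 0 < β n ∧ β n ≤ 1)
    (hα_range : ∀ n, 0 < α n ∧ α n ≤ 1)
    (hθ_anti : Antitone θ) (hlam_anti : Antitone lam)
    (hβ_anti : Antitone β) (hα_anti : Antitone α)
    (hθ_lim : Tendsto θ atTop (𝓝 0)) (hlam_lim : Tendsto lam atTop (𝓝 0))
    (hβ_lim : Tendsto β atTop (𝓝 0)) (hα_lim : Tendsto α atTop (𝓝 0))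
    (hC1 : ¬ Summable α)
    (hC2 : Tendsto (fun n => (1 / α (n+1)) * |1 / lam (n+1) - 1 / lam n|) atTop (𝓝 0))
    (hC3 : Tendsto (fun n => (1 / lam (n+1)) * |1 - α n / α (n+1)|) atTop (𝓝 0))
    (hC4 : Tendsto (fun n => α n / lam n) atTop (𝓝 0))
    (hC5 : Tendsto (fun n => θ n / (α (n+1) * lam (n+1))) atTop (𝓝 0))
    (hC6 : ∀ n, lam n / lam (n+1) ≤ σ)
    (hC7 : Tendsto (fun n => β n / α (n+1)) atTop (𝓝 0))
    (x z : ℕ → H) (w y d : ℕ → ℕ → H) (u : ℕ → H)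
    (hd1 : ∀ i ∈ Finset.Icc 1 M, d 1 i = -(h' i (z 0)))
    (hz : ∀ n ≥ 1, z n = x n + θ n • (x n - x (n-1)))
    (hd : ∀ n ≥ 1, ∀ i ∈ Finset.Icc 1 M, d (n+1) i = -(h' i (z n)) + β n • d n i)
    (hy : ∀ n ≥ 1, ∀ i ∈ Finset.Icc 1 M, ∀ v : H,
      f i (y n i) + (1 / (2 * lam n)) * ‖z n + lam n • d (n+1) i - y n i‖ ^ 2
        ≤ f i v + (1 / (2 * lam n)) * ‖z n + lam n • d (n+1) i - v‖ ^ 2)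
    (hw : ∀ n ≥ 1, ∀ i ∈ Finset.Icc 1 M,
      w n (i+1) = α n • u i + (1 - α n) • T i (y n i))
    (hx : ∀ n ≥ 1, x (n+1) = (M : ℝ)⁻¹ • ∑ i ∈ Finset.Icc 1 M, w n (i+1))
    (hy_bdd : ∀ i ∈ Finset.Icc 1 M, ∃ C, ∀ n ≥ 1, ‖y n i‖ ≤ C)
    : Tendsto (fun n => ‖x (n+1) - x n‖ / lam n) atTop (𝓝 0) ∧
      Tendsto (fun n => ‖x (n+1) - x n‖) atTop (𝓝 0) := by
  exact alg2_successive_differences_tendsto_zero_general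
    ⟨hz, hd, hy, hw, fun n hn => (hx n hn).trans Finset.smul_sum⟩
    (fun _ _ => by positivity) (by simp [Nat.one_le_iff_ne_zero.1 hM]) hf_conv hL_pos
    (fun i hi => isCocoercive_of_convexOn (hL_pos i hi) (hh_conv i hi) (hh_grad i hi) (hh_lip i hi))
    (fun i hi => IsCocoercive.lipschitzWith_one (by simpa [IsCocoercive] using hT_firm i hi))
    (fun n => (hθ_range n).1) hlam_pos hlam_le (fun n => (hβ_range n).1.le) hα_range hθ_anti
    hβ_anti hC1 hC2 hC3 hC5 hC7 hy_bdd
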